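/- Let k ≥ 1, let X and Y_1, …, Y_k be finite-dimensional real inner product spaces (hence Hilbert), let B_i be a maximally monotone set-valued operator on Y_i and K_i : X → Y_i a continuous linear operator with adjoint K_i*, for i = 1, …, k, and let ω_1, …, ω_k ∈ (0,1] with Σ_{i=1}^k ω_i = 1. Let σ, τ > 0 satisfy στ·Σ_{i=1}^k ‖K_i‖² < 1 and assume there exist x ∈ X and v_i with (K_i x, v_i) ∈ B_i for all i and Σ_{i=1}^k ω_i K_i* v_i = 0. Let sequences (x^n), (x̄^n) in X and (y_i^n) in Y_i satisfy x̄^0 = x^0 and, for every n ≥ 0: (σ^{-1}(y_i^n + σ K_i x̄^n − y_i^{n+1}), y_i^{n+1}) ∈ B_i for each i; x^{n+1} = x^n − τ Σ_{i=1}^k ω_i K_i* y_i^{n+1}; x̄^{n+1} = 2x^{n+1} − x^n. Then there exist x* ∈ X and y_i* ∈ Y_i with (K_i x*, y_i*) ∈ B_i for every i and Σ_{i=1}^k ω_i K_i* y_i* = 0, such that x^n → x* and y_i^n → y_i* for every i; in particular x* solves the primal inclusion 0 ∈ Σ_{i=1}^k ω_i K_i* B_i K_i x and (y_1*, …, y_k*)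 solves the corresponding dual inclusion. -/

import Mathlib

/-!
The recursion is a proximal point iteration in disguise. Put `z n = (x n, y (n+1))`. Then
`M (z n - z (n+1)) ∈ T (z (n+1))`, where `T (a, b) = (∑ ωᵢ Kᵢ* bᵢ, (Bᵢ⁻¹ bᵢ - Kᵢ a)ᵢ)` is monotone
for the `ω`-weighted inner product, its zeros are the primal-dual solutions, and
`M = [[τ⁻¹, -K*], [-K, σ⁻¹]]` is positive definite because `σ τ ∑ ‖Kᵢ‖² < 1` and `ωᵢ ≤ 1`
(`pdQuad_coercive`).

Monotonicity of `T` (`pdForm_nonneg`) and the three-point identity for the quadratic form `Q` of `M`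
give `Q (z (n+1) - s) + Q (z n - z (n+1)) ≤ Q (z n - s)` for every solution `s`. Hence `z` is bounded
and its increments vanish; by finite dimension it has a cluster point, which is a solution since
maximally monotone graphs are closed (`IsMaxMonotoneOp.mem_of_tendsto`). Fejér monotonicity with
respect to that cluster point forces convergence of the whole sequence (`tendsto_of_fejer`).
-/

open RealInnerProductSpace Filter

/-- A set-valued operator, identified with its graph, is monotone. -/
def IsMonotoneOp {Z : Type*} [NormedAddCommGroup Z] [InnerProductSpace ℝ Z]
    (A : Set (Z × Z)) : Prop :=
  ∀ p ∈ A, ∀ q ∈ A, (0:ℝ) ≤ ⟪p.1 - q.1, p.2 - q.2⟫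

/-- A set-valued operator is maximally monotone. -/
def IsMaxMonotoneOp {Z : Type*} [NormedAddCommGroup Z] [InnerProductSpace ℝ Z]
    (A : Set (Z × Z)) : Prop :=
  IsMonotoneOp A ∧ ∀ B : Set (Z × Z), IsMonotoneOp B → A ⊆ B → B = A

open Topology

/-! ### Closed graphs and Fejér monotone sequences -/

/-- The graph of a maximally monotone operator is sequentially closed. -/
lemma IsMaxMonotoneOp.mem_of_tendsto {Z : Type*} [NormedAddCommGroup Z] [InnerProductSpace ℝ Z]
    {A : Set (Z × Z)} (hA : IsMaxMonotoneOp A) {u v : ℕ → Z} {a b : Z}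
    (hmem : ∀ n, (u n, v n) ∈ A) (hu : Tendsto u atTop (𝓝 a)) (hv : Tendsto v atTop (𝓝 b)) :
    (a, b) ∈ A := by
  have key : ∀ q ∈ A, (0:ℝ) ≤ ⟪a - q.1, b - q.2⟫ := fun q hq =>
    ge_of_tendsto' ((hu.sub_const q.1).inner (hv.sub_const q.2))
      fun n => hA.1 _ (hmem n) q hq
  have hmono : IsMonotoneOp (insert (a, b) A) := by
    rintro p (rfl | hp) q (rfl | hq)
    · simp
    · exact key q hq
    · have h := key p hp
      rw [← inner_neg_neg] at h
      simpa using h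
    · exact hA.1 p hp q hq
  rw [← hA.2 _ hmono (Set.subset_insert _ _)]
  exact Set.mem_insert _ _

/-- Opial-type convergence principle: a sequence in a proper space that is Fejér monotone, with a
quadratic decrease, with respect to a nonempty set `S` converges to a point of `S`, provided that
`S` contains each of its cluster points along which the shifted sequence has the same limit. -/
lemma tendsto_of_fejer {H : Type*} [NormedAddCommGroup H] [ProperSpace H]
    {S : Set H} (hS : S.Nonempty) {Q : H → ℝ} (hQc : Continuous Q) (hQ0 : Q 0 = 0)
    {c : ℝ} (hc : 0 < c) (hQ : ∀ h, c * ‖h‖ ^ 2 ≤ Q h) {z : ℕ → H}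
    (hF : ∀ s ∈ S, ∀ n, Q (z (n + 1) - s) + Q (z n - z (n + 1)) ≤ Q (z n - s))
    (hcl : ∀ (s : H) (φ : ℕ → ℕ), Tendsto (fun n => z (φ n)) atTop (𝓝 s) →
      Tendsto (fun n => z (φ n + 1)) atTop (𝓝 s) → s ∈ S) :
    ∃ s ∈ S, Tendsto z atTop (𝓝 s) := by
  have hQnn : ∀ h, 0 ≤ Q h := fun h => le_trans (by positivity) (hQ h)
  have hanti : ∀ s ∈ S, Antitone fun n => Q (z n - s) := fun s hs =>
    antitone_nat_of_succ_le fun n => by linarith [hF s hs n, hQnn (z n - z (n + 1))]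
  have hsmall : ∀ w : ℕ → H, Tendsto (fun n => Q (w n)) atTop (𝓝 0) →
      Tendsto w atTop (𝓝 0) := by
    intro w hw
    rw [tendsto_zero_iff_norm_tendsto_zero]
    have h2 : Tendsto (fun n => ‖w n‖ ^ 2) atTop (𝓝 0) := by
      refine squeeze_zero (fun n => by positivity) (fun n => ?_)
        (by simpa using hw.const_mul c⁻¹)
      rw [inv_mul_eq_div, le_div_iff₀ hc]
      linarith [hQ (w n)]
    have h3 := h2.sqrt
    simpa [Real.sqrt_sq] using h3
  obtain ⟨s₀, hs₀⟩ := hS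
  obtain ⟨l, hl⟩ : ∃ l, Tendsto (fun n => Q (z n - s₀)) atTop (𝓝 l) :=
    ⟨_, tendsto_atTop_ciInf (hanti s₀ hs₀) ⟨0, by rintro _ ⟨n, rfl⟩; exact hQnn _⟩⟩
  have hdiff : Tendsto (fun n => z n - z (n + 1)) atTop (𝓝 0) := by
    apply hsmall
    have h := hl.sub (hl.comp (tendsto_add_atTop_nat 1))
    rw [sub_self] at h
    refine squeeze_zero (fun n => hQnn _) (fun n => ?_) h
    simp only [Function.comp_apply]
    linarith [hF s₀ hs₀ n]
  have hbdd : ∀ n, z n ∈ Metric.closedBall s₀ √(Q (z 0 - s₀) / c) := by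
    intro n
    rw [mem_closedBall_iff_norm]
    apply Real.le_sqrt_of_sq_le
    rw [le_div_iff₀ hc]
    linarith [hQ (z n - s₀), hanti s₀ hs₀ (Nat.zero_le n)]
  obtain ⟨s, -, φ, hφ, hs⟩ := (isCompact_closedBall s₀ _).tendsto_subseq hbdd
  have hs1 : Tendsto (fun n => z (φ n + 1)) atTop (𝓝 s) := by
    have h := hs.sub (hdiff.comp hφ.tendsto_atTop)
    simpa [Function.comp_def] using h
  have hsS : s ∈ S := hcl s φ hs hs1
  refine ⟨s, hsS, ?_⟩
  have hsub : Tendsto (fun n => Q (z (φ n) - s)) atTop (𝓝 0) := by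
    have h := (hQc.tendsto _).comp (hs.sub_const s)
    simpa [Function.comp_def, hQ0] using h
  have hall : Tendsto (fun n => Q (z n - s)) atTop (𝓝 0) := by
    -- An antitone sequence converges to the limit of any of its subsequences.
    have h := tendsto_atTop_ciInf (hanti s hsS) ⟨0, by rintro _ ⟨n, rfl⟩; exact hQnn _⟩
    rwa [tendsto_nhds_unique (h.comp hφ.tendsto_atTop) hsub] at h
  exact tendsto_sub_nhds_zero_iff.1 (hsmall _ hall)

/-! ### The preconditioned primal-dual operator -/

section PrimalDual

variable {k : ℕ} {X : Type*} [NormedAddCommGroup X] [InnerProductSpace ℝ X]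
  {Y : Fin k → Type*} [∀ i, NormedAddCommGroup (Y i)] [∀ i, InnerProductSpace ℝ (Y i)]

/-- The symmetric bilinear form of the preconditioner `[[τ⁻¹, -K*], [-K, σ⁻¹]]` on
`X × ∏ i, Y i`, the second factor carrying the `ω`-weighted inner product. -/
noncomputable def pdForm (K : ∀ i, X →L[ℝ] Y i) (ω : Fin k → ℝ) (σ τ : ℝ)
    (p q : X × ∀ i, Y i) : ℝ :=
  τ⁻¹ * ⟪p.1, q.1⟫ + ∑ i, ω i * (σ⁻¹ * ⟪p.2 i, q.2 i⟫ - ⟪K i p.1, q.2 i⟫ - ⟪K i q.1, p.2 i⟫)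

lemma pdForm_add_self (K : ∀ i, X →L[ℝ] Y i) (ω : Fin k → ℝ) (σ τ : ℝ) (p q : X × ∀ i, Y i) :
    pdForm K ω σ τ (p + q) (p + q) =
      pdForm K ω σ τ p p + pdForm K ω σ τ q q + 2 * pdForm K ω σ τ p q := by
  have h : ∀ i, ω i * (σ⁻¹ * ⟪(p + q).2 i, (p + q).2 i⟫ - ⟪K i (p + q).1, (p + q).2 i⟫
        - ⟪K i (p + q).1, (p + q).2 i⟫) =
      ω i * (σ⁻¹ * ⟪p.2 i, p.2 i⟫ - ⟪K i p.1, p.2 i⟫ - ⟪K i p.1, p.2 i⟫) +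
      ω i * (σ⁻¹ * ⟪q.2 i, q.2 i⟫ - ⟪K i q.1, q.2 i⟫ - ⟪K i q.1, q.2 i⟫) +
      2 * (ω i * (σ⁻¹ * ⟪p.2 i, q.2 i⟫ - ⟪K i p.1, q.2 i⟫ - ⟪K i q.1, p.2 i⟫)) := by
    intro i
    simp only [Prod.fst_add, Prod.snd_add, Pi.add_apply, map_add, inner_add_left, inner_add_right]
    rw [real_inner_comm (p.2 i) (q.2 i)]
    ring
  simp only [pdForm]
  rw [Finset.sum_congr rfl fun i _ => h i, Finset.sum_add_distrib, Finset.sum_add_distrib,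
    ← Finset.mul_sum]
  simp only [Prod.fst_add, inner_add_left, inner_add_right]
  rw [real_inner_comm p.1 q.1]
  ring

/-- Positive definiteness of the preconditioner, with respect to the sup norm of the product. -/
lemma pdQuad_coercive (K : ∀ i, X →L[ℝ] Y i) {ω : Fin k → ℝ} (hω : ∀ i, 0 < ω i ∧ ω i ≤ 1)
    {σ τ : ℝ} (hσ : 0 < σ) (hτ : 0 < τ) (hστ : σ * τ * ∑ i, ‖K i‖ ^ 2 < 1) :
    ∃ c : ℝ, 0 < c ∧ ∀ p : X × ∀ i, Y i, c * ‖p‖ ^ 2 ≤ pdForm K ω σ τ p p := by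
  set L := ∑ i, ‖K i‖ ^ 2 with hL
  have hL0 : 0 ≤ L := Finset.sum_nonneg fun i _ => by positivity
  -- A Young parameter `θ > 1` that still satisfies `θ σ τ L < 1`.
  obtain ⟨θ, hθ1, hθ⟩ : ∃ θ : ℝ, 1 < θ ∧ θ * (σ * τ * L) < 1 := by
    have h0 : 0 ≤ σ * τ * L := by positivity
    refine ⟨2 / (1 + σ * τ * L), ?_, ?_⟩
    · rw [lt_div_iff₀ (by positivity)]; linarith
    · rw [div_mul_eq_mul_div, div_lt_one (by positivity)]; linarith
  have hθ0 : 0 < θ := by linarith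
  set α := τ⁻¹ - θ * σ * L with hα
  set β := σ⁻¹ * (1 - θ⁻¹) with hβ
  have hα0 : 0 < α := by
    have : α = τ⁻¹ * (1 - θ * (σ * τ * L)) := by rw [hα]; field_simp
    rw [this]
    exact mul_pos (by positivity) (by linarith)
  have hβ0 : 0 < β := mul_pos (by positivity) (by linarith [inv_lt_one_of_one_lt₀ hθ1])
  have hlow : ∀ p : X × ∀ i, Y i,
      α * ‖p.1‖ ^ 2 + ∑ i, β * ω i * ‖p.2 i‖ ^ 2 ≤ pdForm K ω σ τ p p := by
    intro p
    have hterm : ∀ i, β * ω i * ‖p.2 i‖ ^ 2 - θ * σ * ‖p.1‖ ^ 2 * ‖K i‖ ^ 2 ≤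
        ω i * (σ⁻¹ * ⟪p.2 i, p.2 i⟫ - ⟪K i p.1, p.2 i⟫ - ⟪K i p.1, p.2 i⟫) := by
      intro i
      have h1 : ⟪K i p.1, p.2 i⟫ ≤ ‖K i‖ * ‖p.1‖ * ‖p.2 i‖ :=
        (real_inner_le_norm _ _).trans (by gcongr; exact (K i).le_opNorm _)
      have h2 : 2 * (‖K i‖ * ‖p.1‖ * ‖p.2 i‖) ≤
          θ * σ * ‖p.1‖ ^ 2 * ‖K i‖ ^ 2 + σ⁻¹ * θ⁻¹ * ‖p.2 i‖ ^ 2 := by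
        have h : 0 ≤ (θ * σ)⁻¹ * (θ * σ * (‖K i‖ * ‖p.1‖) - ‖p.2 i‖) ^ 2 := by positivity
        have h' : (θ * σ)⁻¹ * (θ * σ * (‖K i‖ * ‖p.1‖) - ‖p.2 i‖) ^ 2 =
            θ * σ * ‖p.1‖ ^ 2 * ‖K i‖ ^ 2 + σ⁻¹ * θ⁻¹ * ‖p.2 i‖ ^ 2
              - 2 * (‖K i‖ * ‖p.1‖ * ‖p.2 i‖) := by
          field_simp
          ring
        linarith
      have h3 : ω i * (2 * ⟪K i p.1, p.2 i⟫) ≤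
          ω i * (θ * σ * ‖p.1‖ ^ 2 * ‖K i‖ ^ 2 + σ⁻¹ * θ⁻¹ * ‖p.2 i‖ ^ 2) :=
        mul_le_mul_of_nonneg_left (by linarith) (hω i).1.le
      have h4 : ω i * (θ * σ * ‖p.1‖ ^ 2 * ‖K i‖ ^ 2) ≤ θ * σ * ‖p.1‖ ^ 2 * ‖K i‖ ^ 2 :=
        mul_le_of_le_one_left (by positivity) (hω i).2
      rw [real_inner_self_eq_norm_sq, hβ]
      nlinarith
    have hsum := Finset.sum_le_sum fun i (_ : i ∈ Finset.univ) => hterm i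
    rw [Finset.sum_sub_distrib, ← Finset.mul_sum, ← hL] at hsum
    simp only [pdForm]
    rw [real_inner_self_eq_norm_sq, hα]
    linarith
  obtain ⟨m, hm0, hm⟩ : ∃ m : ℝ, 0 < m ∧ ∀ i, m ≤ ω i := by
    rcases isEmpty_or_nonempty (Fin k) with h | h
    · exact ⟨1, one_pos, fun i => h.elim i⟩
    · obtain ⟨j, hj⟩ := Finite.exists_min ω
      exact ⟨ω j, (hω j).1, hj⟩
  have hnn : ∀ (p : X × ∀ i, Y i) (i : Fin k), 0 ≤ β * ω i * ‖p.2 i‖ ^ 2 := fun p i =>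
    mul_nonneg (mul_nonneg hβ0.le (hω i).1.le) (sq_nonneg _)
  refine ⟨min α (β * m), lt_min hα0 (by positivity), fun p => ?_⟩
  have hc0 : 0 < min α (β * m) := lt_min hα0 (by positivity)
  have hq := hlow p
  have hsum0 := Finset.sum_nonneg fun i (_ : i ∈ Finset.univ) => hnn p i
  have hα1 : 0 ≤ α * ‖p.1‖ ^ 2 := by positivity
  have hq0 : 0 ≤ pdForm K ω σ τ p p := by linarith
  have hb : ‖p‖ ≤ √(pdForm K ω σ τ p p / min α (β * m)) := by
    refine (Prod.norm_def p).trans_le (max_le ?_ ?_)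
    · apply Real.le_sqrt_of_sq_le
      rw [le_div_iff₀ hc0]
      have := mul_le_mul_of_nonneg_left (min_le_left α (β * m)) (sq_nonneg ‖p.1‖)
      linarith
    · refine (pi_norm_le_iff_of_nonneg (Real.sqrt_nonneg _)).2 fun i => ?_
      apply Real.le_sqrt_of_sq_le
      rw [le_div_iff₀ hc0]
      have h1 : min α (β * m) ≤ β * ω i :=
        (min_le_right _ _).trans (mul_le_mul_of_nonneg_left (hm i) hβ0.le)
      have h2 := mul_le_mul_of_nonneg_right h1 (sq_nonneg ‖p.2 i‖)
      have h3 := Finset.single_le_sum (fun j _ => hnn p j) (Finset.mem_univ i)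
      linarith
  have hb2 := pow_le_pow_left₀ (norm_nonneg p) hb 2
  rw [Real.sq_sqrt (by positivity), le_div_iff₀ hc0] at hb2
  linarith

/-- Monotonicity of the primal-dual operator, tested at one step of the iteration. Here
`(a, b)` is the current iterate, `(a', b')` the next one, `u i ∈ (B i)⁻¹ (b' i)` and `(s, t)` is a
solution. -/
lemma pdForm_nonneg {B : ∀ i, Set (Y i × Y i)} (hB : ∀ i, IsMonotoneOp (B i))
    {K : ∀ i, X →L[ℝ] Y i} {Kadj : ∀ i, Y i →L[ℝ] X}
    (hadj : ∀ i, ∀ (x : X) (y : Y i), ⟪Kadj i y, x⟫ = ⟪y, K i x⟫)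
    {ω : Fin k → ℝ} (hω : ∀ i, 0 < ω i) {σ τ : ℝ} (hσ : 0 < σ) (hτ : 0 < τ)
    {a a' s : X} {b b' t : ∀ i, Y i}
    (hst : ∀ i, (K i s, t i) ∈ B i) (ht : ∑ i, ω i • Kadj i (t i) = 0)
    (ha : a' = a - τ • ∑ i, ω i • Kadj i (b i))
    (hb : ∀ i, (σ⁻¹ • (b i + σ • K i ((2:ℝ) • a' - a) - b' i), b' i) ∈ B i) :
    0 ≤ pdForm K ω σ τ ((a, b) - (a', b')) ((a', b') - (s, t)) := by
  have hx : τ⁻¹ * ⟪a - a', a' - s⟫ = ∑ i, ω i * ⟪b i, K i (a' - s)⟫ := by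
    have : a - a' = τ • ∑ i, ω i • Kadj i (b i) := by rw [ha]; abel
    rw [this, real_inner_smul_left, inv_mul_cancel_left₀ hτ.ne', sum_inner]
    simp only [real_inner_smul_left, hadj]
  have ht' : ∑ i, ω i * ⟪t i, K i (a' - s)⟫ = 0 := by
    have h : ⟪∑ i, ω i • Kadj i (t i), a' - s⟫ = 0 := by rw [ht, inner_zero_left]
    rw [sum_inner] at h
    simpa only [real_inner_smul_left, hadj] using h
  have key : pdForm K ω σ τ ((a, b) - (a', b')) ((a', b') - (s, t)) = ∑ i, ω i *
      ⟪σ⁻¹ • (b i + σ • K i ((2:ℝ) • a' - a) - b' i) - K i s, b' i - t i⟫ := by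
    have h0 : pdForm K ω σ τ ((a, b) - (a', b')) ((a', b') - (s, t)) =
        pdForm K ω σ τ ((a, b) - (a', b')) ((a', b') - (s, t)) -
          ∑ i, ω i * ⟪t i, K i (a' - s)⟫ := by rw [ht', sub_zero]
    rw [h0]
    simp only [pdForm, Prod.fst_sub, Prod.snd_sub]
    rw [hx, ← Finset.sum_add_distrib, ← Finset.sum_sub_distrib]
    refine Finset.sum_congr rfl fun i _ => ?_
    have hu : σ⁻¹ • (b i + σ • K i ((2:ℝ) • a' - a) - b' i) =
        σ⁻¹ • (b i - b' i) + ((2:ℝ) • K i a' - K i a) := by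
      rw [add_sub_right_comm, smul_add, inv_smul_smul₀ hσ.ne', map_sub, map_smul]
    rw [hu]
    simp only [Pi.sub_apply, map_sub, inner_sub_left, inner_sub_right, inner_add_left,
      real_inner_smul_left]
    rw [real_inner_comm (b i) (K i a'), real_inner_comm (b i) (K i s),
      real_inner_comm (t i) (K i a'), real_inner_comm (t i) (K i s)]
    ring
  rw [key]
  exact Finset.sum_nonneg fun i _ => mul_nonneg (hω i).le (hB i _ (hb i) _ (hst i))

end PrimalDual

/-! ### Convergence of the primal-dual iteration -/

theorem stmt_8
    {k : ℕ} (hk : 1 ≤ k)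
    {X : Type*} [NormedAddCommGroup X] [InnerProductSpace ℝ X] [FiniteDimensional ℝ X]
    {Y : Fin k → Type*} [∀ i, NormedAddCommGroup (Y i)] [∀ i, InnerProductSpace ℝ (Y i)]
    [∀ i, FiniteDimensional ℝ (Y i)]
    (B : ∀ i, Set (Y i × Y i)) (hB : ∀ i, IsMaxMonotoneOp (B i))
    (K : ∀ i, X →L[ℝ] Y i) (Kadj : ∀ i, Y i →L[ℝ] X)
    (hadj : ∀ i, ∀ (x : X) (y : Y i), ⟪Kadj i y, x⟫ = ⟪y, K i x⟫)
    (ω : Fin k → ℝ) (hω : ∀ i, 0 < ω i ∧ ω i ≤ 1) (hωsum : ∑ i, ω i = 1)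
    (σ τ : ℝ) (hσ : 0 < σ) (hτ : 0 < τ)
    (hστ : σ * τ * ∑ i, ‖K i‖^2 < 1)
    (hsol : ∃ (x : X) (v : ∀ i, Y i),
      (∀ i, (K i x, v i) ∈ B i) ∧ ∑ i, ω i • Kadj i (v i) = 0)
    (x xb : ℕ → X) (y : ℕ → ∀ i, Y i)
    (hxb0 : xb 0 = x 0)
    (hy : ∀ (n : ℕ) (i : Fin k),
      (σ⁻¹ • (y n i + σ • K i (xb n) - y (n+1) i), y (n+1) i) ∈ B i)
    (hx : ∀ n : ℕ, x (n+1) = x n - τ • ∑ i, ω i • Kadj i (y (n+1) i))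
    (hxbn : ∀ n : ℕ, xb (n+1) = (2:ℝ) • x (n+1) - x n) :
    ∃ (xs : X) (ys : ∀ i, Y i),
      (∀ i, (K i xs, ys i) ∈ B i) ∧ ∑ i, ω i • Kadj i (ys i) = 0 ∧
      Tendsto x atTop (nhds xs) ∧
      ∀ i, Tendsto (fun n => y n i) atTop (nhds (ys i)) := by
  obtain ⟨c, hc, hco⟩ := pdQuad_coercive (Y := Y) K hω hσ hτ hστ
  have : ProperSpace (X × ∀ i, Y i) := FiniteDimensional.proper_real _
  set S : Set (X × ∀ i, Y i) :=
    {p | (∀ i, (K i p.1, p.2 i) ∈ B i) ∧ ∑ i, ω i • Kadj i (p.2 i) = 0} with hS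
  have hy' : ∀ n i, (σ⁻¹ • (y (n + 1) i + σ • K i ((2:ℝ) • x (n + 1) - x n) - y (n + 2) i),
      y (n + 2) i) ∈ B i := by
    intro n i
    rw [← hxbn]
    exact hy (n + 1) i
  obtain ⟨⟨xs, ys⟩, ⟨hs1, hs2⟩, hlim⟩ :=
    tendsto_of_fejer (S := S) (Q := fun p => pdForm K ω σ τ p p) (c := c)
      (z := fun n => (x n, y (n + 1)))
      (by obtain ⟨s, t, h1, h2⟩ := hsol; exact ⟨(s, t), h1, h2⟩)
      (by unfold pdForm; fun_prop) (by simp [pdForm]) hc hco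
      (by
        rintro ⟨s, t⟩ ⟨h1, h2⟩ n
        have h := pdForm_nonneg (fun i => (hB i).1) hadj (fun i => (hω i).1) hσ hτ
          h1 h2 (hx n) (hy' n)
        have h3 := pdForm_add_self K ω σ τ ((x n, y (n + 1)) - (x (n + 1), y (n + 2)))
          ((x (n + 1), y (n + 2)) - (s, t))
        rw [sub_add_sub_cancel] at h3
        simp only [add_assoc, Nat.reduceAdd]
        linarith)
      (by
        rintro ⟨s, t⟩ φ h1 h2
        have hx1 : Tendsto (fun n => x (φ n)) atTop (𝓝 s) := (continuous_fst.tendsto _).comp h1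
        have hx2 : Tendsto (fun n => x (φ n + 1)) atTop (𝓝 s) :=
          (continuous_fst.tendsto _).comp h2
        have hy1 : ∀ i, Tendsto (fun n => y (φ n + 1) i) atTop (𝓝 (t i)) := fun i =>
          (((continuous_apply i).comp continuous_snd).tendsto _).comp h1
        have hy2 : ∀ i, Tendsto (fun n => y (φ n + 2) i) atTop (𝓝 (t i)) := fun i =>
          (((continuous_apply i).comp continuous_snd).tendsto _).comp h2
        refine ⟨fun i => (hB i).mem_of_tendsto (fun n => hy' (φ n) i) ?_ (hy2 i), ?_⟩
        · have h := (((hy1 i).add ((((K i).continuous.tendsto _).comp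
            ((hx2.const_smul (2:ℝ)).sub hx1)).const_smul σ)).sub (hy2 i)).const_smul σ⁻¹
          have he : σ⁻¹ • (t i + σ • K i ((2:ℝ) • s - s) - t i) = K i s := by
            rw [add_sub_cancel_left, inv_smul_smul₀ hσ.ne', two_smul, add_sub_cancel_right]
          rw [he] at h
          exact h
        -- The residual `∑ ωᵢ Kᵢ* yᵢ` is `τ⁻¹` times a decrement of `x`.
        · have h3 : Tendsto (fun n => ∑ i, ω i • Kadj i (y (φ n + 1) i)) atTop
              (𝓝 (∑ i, ω i • Kadj i (t i))) :=
            tendsto_finsetSum _ fun i _ =>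
              (((Kadj i).continuous.tendsto _).comp (hy1 i)).const_smul (ω i)
          have h4 := (hx1.sub hx2).const_smul τ⁻¹
          rw [sub_self, smul_zero] at h4
          refine tendsto_nhds_unique h3 (h4.congr fun n => ?_)
          rw [hx (φ n), sub_sub_cancel, inv_smul_smul₀ hτ.ne'])
  refine ⟨xs, ys, hs1, hs2, (continuous_fst.tendsto _).comp hlim, fun i => ?_⟩
  rw [← tendsto_add_atTop_iff_nat 1]
  exact (((continuous_apply i).comp continuous_snd).tendsto _).comp hlim
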